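/- Let (X, 𝒯, P, ≤, {σ_x : x ∈ X}) be a p-symmetrically typed topological space for a type p ∈ P, and suppose the assignment σ has least p-neighborhood. Then for every x ∈ X, the type-p-connected component equals the transitive p-closure of x: p⊢C(x) = p⊢tr(x). -/

import Mathlib

open Set

/-- A typed topological space: a topological space `X` together with a partially
ordered set `P` of types and, for each `x : X`, a partial assignment `σ x` of
types to open sets containing `x`, such that on its domain the assignment is
order-reflecting: `σ x U ≤ σ x V ↔ U ⊆ V`. -/
structure TypedSpace (X : Type*) (P : Type*) [TopologicalSpace X] [PartialOrder P] where
  σ : X → Set X → Option P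
  dom_mem : ∀ x U p, σ x U = some p → IsOpen U ∧ x ∈ U
  mono : ∀ x U V pU pV, σ x U = some pU → σ x V = some pV → (pU ≤ pV ↔ U ⊆ V)

namespace TypedSpace

variable {X P : Type*} [TopologicalSpace X] [PartialOrder P]

/-- `U` is a type-`p` open neighborhood of `x`, written `p ⊢ U(x)`. -/
def IsNbhd (T : TypedSpace X P) (p : P) (x : X) (U : Set X) : Prop :=
  T.σ x U = some p

/-- `x` is a `p`-accumulation point of `A`: every type-`p` open neighborhood
of `x` meets `A`. -/
def IsAccPt (T : TypedSpace X P) (p : P) (A : Set X) (x : X) : Prop :=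
  ∀ U, T.IsNbhd p x U → (U ∩ A).Nonempty

/-- The direct `p`-closure `p⊢CL₁(A) = A ∪ {x : x is a p-accumulation point of A}`. -/
def CL1 (T : TypedSpace X P) (p : P) (A : Set X) : Set X :=
  A ∪ {x | T.IsAccPt p A x}

/-- Iterated `p`-closures: `p⊢CL₀(A) = A`, `p⊢CLₙ₊₁(A) = p⊢CL₁(p⊢CLₙ(A))`. -/
def CLn (T : TypedSpace X P) (p : P) : ℕ → Set X → Set X
  | 0, A => A
  | n + 1, A => T.CL1 p (T.CLn p n A)

/-- The transitive `p`-closure `p⊢tr(A) = ⋃ₙ p⊢CLₙ(A)`. -/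
def tr (T : TypedSpace X P) (p : P) (A : Set X) : Set X :=
  ⋃ n, T.CLn p n A

/-- The tracks: `p⊢Track₀(A) = A`, and `p⊢Trackᵢ(A) = p⊢CLᵢ(A) \ p⊢CLᵢ₋₁(A)` for `i ≥ 1`. -/
def Track (T : TypedSpace X P) (p : P) (i : ℕ) (A : Set X) : Set X :=
  if i = 0 then A else T.CLn p i A \ T.CLn p (i - 1) A

/-- `Umin` assigns to each point a least type-`p` open neighborhood. -/
def HasLeast (T : TypedSpace X P) (p : P) (Umin : X → Set X) : Prop :=
  ∀ x, T.IsNbhd p x (Umin x) ∧ ∀ V, T.IsNbhd p x V → Umin x ⊆ V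

/-- The type of English-text "σ has least p-neighborhood": some least neighborhood
assignment exists. -/
def HasLeastNbhd (T : TypedSpace X P) (p : P) : Prop :=
  ∃ Umin : X → Set X, T.HasLeast p Umin

/-- `A` is type-`p`-connected: there do not exist two collections of type-`p`
open neighborhoods `{p⊢U(xᵢ) : i ∈ I}`, `{p⊢V(xⱼ) : j ∈ J}` with `I, J` nonempty,
`A = {xᵢ} ∪ {xⱼ}` and `(⋃ U(xᵢ)) ∩ (⋃ V(xⱼ)) = ∅`. -/
def Connected (T : TypedSpace X P) (p : P) (A : Set X) : Prop :=
  ¬ ∃ (s t : Set X) (U V : X → Set X),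
      s.Nonempty ∧ t.Nonempty ∧ A = s ∪ t ∧
      (∀ x ∈ s, T.IsNbhd p x (U x)) ∧ (∀ y ∈ t, T.IsNbhd p y (V y)) ∧
      (⋃ x ∈ s, U x) ∩ (⋃ y ∈ t, V y) = ∅

/-- The type-`p`-connected component of `x`: the union of all type-`p`-connected
subsets containing `x`. -/
def Comp (T : TypedSpace X P) (p : P) (x : X) : Set X :=
  ⋃₀ {A : Set X | x ∈ A ∧ T.Connected p A}

/-- The space is `p`-symmetrically typed. -/
def SymTyped (T : TypedSpace X P) (p : P) : Prop :=
  ∀ x y : X, (∃ U, T.IsNbhd p x U ∧ y ∉ U) → ∃ V, T.IsNbhd p y V ∧ x ∉ V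

/-- `D` and `D'` are `p`-closure disjoint. -/
def ClosureDisjoint (T : TypedSpace X P) (p : P) (D D' : Set X) : Prop :=
  T.tr p D ∩ T.tr p D' = ∅

/-- `D` is `p`-closure connected: it cannot be partitioned into two nonempty
`p`-closure disjoint subsets. -/
def ClosureConnected (T : TypedSpace X P) (p : P) (D : Set X) : Prop :=
  ¬ ∃ E E' : Set X, E.Nonempty ∧ E'.Nonempty ∧ E ∪ E' = D ∧ E ∩ E' = ∅ ∧
      T.ClosureDisjoint p E E'

/-- The cluster `p⊢tr(x)` is straight. -/
def StraightAt (T : TypedSpace X P) (p : P) (x : X) : Prop :=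
  ∀ i j : ℕ, 0 < i → i < j → ∀ y z : X,
    y ∈ T.Track p i {x} → z ∈ T.Track p j {x} →
      y ∈ T.CL1 p {z} → z ∈ T.CL1 p {y}

/-- `X` is `p`-straight: every cluster `p⊢tr(x)` is straight. -/
def Straight (T : TypedSpace X P) (p : P) : Prop :=
  ∀ x : X, T.StraightAt p x

/-- `X` is `(p, q)`-uniformly typed. -/
def UniformlyTyped (T : TypedSpace X P) (p q : P) : Prop :=
  ∀ (x : X) (j k : ℕ), (T.CLn p j {x} ∩ T.CLn q k {x}).Nonempty →
    T.CLn p j {x} ⊆ T.CLn q k {x}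

/-- The cluster `q⊢tr(x)` is `(p,q)`-straight: for `y, z, w ∈ q⊢tr(x)` with
`z, w ∈ p⊢tr(y)`, `index_{p,y}(z) ≤ index_{p,y}(w)` implies
`index_{q,y}(z) ≤ index_{q,y}(w)` (indices being the track numbers). -/
def PQStraightAt (T : TypedSpace X P) (p q : P) (x : X) : Prop :=
  ∀ y z w : X, y ∈ T.tr q {x} → z ∈ T.tr q {x} → w ∈ T.tr q {x} →
    z ∈ T.tr p {y} → w ∈ T.tr p {y} →
    ∀ iz iw : ℕ, z ∈ T.Track p iz {y} → w ∈ T.Track p iw {y} → iz ≤ iw →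
      ∀ jz jw : ℕ, z ∈ T.Track q jz {y} → w ∈ T.Track q jw {y} → jz ≤ jw

end TypedSpace

/-!
Since `σ x` reflects the order, a point has at most one type-`p` neighborhood. Hence, for a point
`y` that has one, being a `p`-accumulation point of `{w}` just says that `w` lies in it. Symmetric
typing makes this relation between `y` and `w` symmetric, and `tr p A` is closed under it.
When every point has a type-`p` neighborhood, these neighborhoods therefore separate `tr p A` from
its complement, so a connected set meeting `A` stays inside `tr p A`. When some point has none, it
vacuously accumulates at every singleton and, by symmetry, every point accumulates at it, so
`tr p A` is the whole space. Conversely, as in topology, the transitive closure of a connected set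
is connected: a direct closure step cannot cross a separation.
-/

namespace TypedSpace

variable {X P : Type*} [TopologicalSpace X] [PartialOrder P] {T : TypedSpace X P} {p : P}
  {A B s t s' t' U V : Set X} {x y w z : X}

theorem IsNbhd.mem (hU : T.IsNbhd p x U) : x ∈ U :=
  (T.dom_mem x U p hU).2

theorem IsNbhd.eq (hU : T.IsNbhd p x U) (hV : T.IsNbhd p x V) : U = V :=
  Subset.antisymm ((T.mono x U V p p hU hV).1 le_rfl) ((T.mono x V U p p hV hU).1 le_rfl)

theorem IsAccPt.mono (hx : T.IsAccPt p A x) (hAB : A ⊆ B) : T.IsAccPt p B x :=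
  fun U hU => (hx U hU).mono (inter_subset_inter_right U hAB)

theorem isAccPt_singleton_iff : T.IsAccPt p {y} x ↔ ∀ U, T.IsNbhd p x U → y ∈ U := by
  simp only [IsAccPt, inter_singleton_nonempty]

theorem IsNbhd.isAccPt_singleton (hU : T.IsNbhd p x U) (hy : y ∈ U) : T.IsAccPt p {y} x :=
  isAccPt_singleton_iff.2 fun _ hV => hU.eq hV ▸ hy

theorem SymTyped.isAccPt_singleton_symm (hsym : T.SymTyped p) (h : T.IsAccPt p {y} x) :
    T.IsAccPt p {x} y := by
  rw [isAccPt_singleton_iff] at h ⊢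
  by_contra! hxy
  obtain ⟨V, hV, hyV⟩ := hsym y x hxy
  exact hyV (h V hV)

theorem CL1_mono (hAB : A ⊆ B) : T.CL1 p A ⊆ T.CL1 p B :=
  union_subset_union hAB fun _ hx => hx.mono hAB

theorem subset_tr : A ⊆ T.tr p A :=
  subset_iUnion (fun n => T.CLn p n A) 0

theorem mem_tr_of_isAccPt_singleton (hw : w ∈ T.tr p A) (hy : T.IsAccPt p {w} y) :
    y ∈ T.tr p A := by
  obtain ⟨n, hn⟩ := mem_iUnion.1 hw
  exact mem_iUnion.2 ⟨n + 1, Or.inr (hy.mono (singleton_subset_iff.2 hn))⟩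

/-- The sets `s` and `t` are *`p`-separated*: their points have type-`p` neighborhoods such that
the union of those chosen for `s` is disjoint from the union of those chosen for `t`. A set is
type-`p`-connected when it is not the union of two nonempty `p`-separated sets. -/
def Separated (T : TypedSpace X P) (p : P) (s t : Set X) : Prop :=
  ∃ U V : X → Set X, (∀ x ∈ s, T.IsNbhd p x (U x)) ∧ (∀ y ∈ t, T.IsNbhd p y (V y)) ∧
    Disjoint (⋃ x ∈ s, U x) (⋃ y ∈ t, V y)

namespace Separated

protected theorem symm (h : T.Separated p s t) : T.Separated p t s := by
  obtain ⟨U, V, hU, hV, hUV⟩ := h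
  exact ⟨V, U, hV, hU, hUV.symm⟩

protected theorem mono (h : T.Separated p s t) (hs : s' ⊆ s) (ht : t' ⊆ t) :
    T.Separated p s' t' := by
  obtain ⟨U, V, hU, hV, hUV⟩ := h
  exact ⟨U, V, fun x hx => hU x (hs hx), fun y hy => hV y (ht hy),
    hUV.mono (biUnion_subset_biUnion_left hs) (biUnion_subset_biUnion_left ht)⟩

theorem disjoint_CL1 (h : T.Separated p s t) : Disjoint (T.CL1 p s) t := by
  obtain ⟨U, V, hU, hV, hUV⟩ := h
  refine disjoint_left.2 fun y hys hyt => ?_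
  obtain ⟨w, hwV, hws⟩ : (V y ∩ s).Nonempty :=
    hys.elim (fun hy => ⟨y, (hV y hyt).mem, hy⟩) (fun hy => hy (V y) (hV y hyt))
  exact disjoint_left.1 hUV (mem_biUnion hws (hU w hws).mem) (mem_biUnion hyt hwV)

protected theorem disjoint (h : T.Separated p s t) : Disjoint s t :=
  h.disjoint_CL1.mono_left subset_union_left

theorem tr_subset (h : T.Separated p s t) (htr : T.tr p A ⊆ s ∪ t) (hA : A ⊆ s) :
    T.tr p A ⊆ s := by
  refine iUnion_subset fun n => ?_
  induction n with
  | zero => exact hA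
  | succ n ih =>
    have hdisj : Disjoint (T.CLn p (n + 1) A) t := h.disjoint_CL1.mono_left (CL1_mono ih)
    exact hdisj.subset_left_of_subset_union ((subset_iUnion _ (n + 1)).trans htr)

end Separated

theorem connected_iff_subset_of_separated :
    T.Connected p A ↔ ∀ s t, T.Separated p s t → A ⊆ s ∪ t → A ⊆ s ∨ A ⊆ t := by
  constructor
  · intro hA s t hst hcover
    have hst' : T.Separated p (A ∩ s) (A ∩ t) := hst.mono inter_subset_right inter_subset_right
    obtain ⟨U, V, hU, hV, hUV⟩ := hst'
    have hsplit : A = A ∩ s ∪ A ∩ t := by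
      rw [← inter_union_distrib_left, inter_eq_left.2 hcover]
    by_contra! hne
    obtain ⟨⟨y, hyA, hys⟩, x, hxA, hxt⟩ := hne.imp not_subset.1 not_subset.1
    exact hA ⟨A ∩ s, A ∩ t, U, V, ⟨x, hxA, (hcover hxA).resolve_right hxt⟩,
      ⟨y, hyA, (hcover hyA).resolve_left hys⟩, hsplit, hU, hV, hUV.inter_eq⟩
  · rintro h ⟨s, t, U, V, ⟨x, hx⟩, ⟨y, hy⟩, rfl, hU, hV, hUV⟩
    have hst : T.Separated p s t := ⟨U, V, hU, hV, disjoint_iff_inter_eq_empty.2 hUV⟩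
    rcases h s t hst Subset.rfl with hs | ht
    · exact disjoint_left.1 hst.disjoint (hs (Or.inr hy)) hy
    · exact disjoint_left.1 hst.disjoint hx (ht (Or.inl hx))

theorem connected_singleton : T.Connected p {x} := by
  simp only [connected_iff_subset_of_separated, singleton_subset_iff, mem_union, imp_self,
    implies_true]

protected theorem Connected.tr (hA : T.Connected p A) : T.Connected p (T.tr p A) := by
  refine connected_iff_subset_of_separated.2 fun s t hst hcover => ?_
  exact (connected_iff_subset_of_separated.1 hA s t hst (subset_tr.trans hcover)).imp
    (hst.tr_subset hcover) (hst.symm.tr_subset (union_comm s t ▸ hcover))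

theorem SymTyped.tr_eq_univ_of_forall_not_isNbhd (hsym : T.SymTyped p) (hA : A.Nonempty)
    (hz : ∀ U, ¬ T.IsNbhd p z U) : T.tr p A = univ := by
  have hacc (y : X) : T.IsAccPt p {y} z := fun U hU => absurd hU (hz U)
  obtain ⟨a, ha⟩ := hA
  have hz_mem : z ∈ T.tr p A := mem_tr_of_isAccPt_singleton (subset_tr ha) (hacc a)
  exact eq_univ_of_forall fun y =>
    mem_tr_of_isAccPt_singleton hz_mem (hsym.isAccPt_singleton_symm (hacc y))

theorem SymTyped.separated_tr_compl (hsym : T.SymTyped p) (hnbhd : ∀ z, ∃ U, T.IsNbhd p z U) :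
    T.Separated p (T.tr p A) (T.tr p A)ᶜ := by
  choose U hU using hnbhd
  refine ⟨U, U, fun x _ => hU x, fun y _ => hU y, disjoint_left.2 fun w hws hwt => ?_⟩
  obtain ⟨x, hx, hwx⟩ := mem_iUnion₂.1 hws
  obtain ⟨y, hy, hwy⟩ := mem_iUnion₂.1 hwt
  have hw : w ∈ T.tr p A :=
    mem_tr_of_isAccPt_singleton hx (hsym.isAccPt_singleton_symm ((hU x).isAccPt_singleton hwx))
  exact hy (mem_tr_of_isAccPt_singleton hw ((hU y).isAccPt_singleton hwy))

theorem Connected.subset_tr (hB : T.Connected p B) (hsym : T.SymTyped p)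
    (hBA : (B ∩ A).Nonempty) : B ⊆ T.tr p A := by
  by_cases hnbhd : ∀ z, ∃ U, T.IsNbhd p z U
  · obtain ⟨b, hbB, hbA⟩ := hBA
    have hb : ¬ B ⊆ (T.tr p A)ᶜ := fun h => h hbB (TypedSpace.subset_tr hbA)
    have hcover : B ⊆ T.tr p A ∪ (T.tr p A)ᶜ := union_compl_self (T.tr p A) ▸ subset_univ B
    exact (connected_iff_subset_of_separated.1 hB _ _ (hsym.separated_tr_compl hnbhd)
      hcover).resolve_right hb
  · push Not at hnbhd
    obtain ⟨z, hz⟩ := hnbhd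
    exact hsym.tr_eq_univ_of_forall_not_isNbhd hBA.right hz ▸ subset_univ B

end TypedSpace

theorem stmt_8_general {X P : Type*} [TopologicalSpace X] [PartialOrder P]
    (T : TypedSpace X P) (p : P) (hsym : T.SymTyped p) (x : X) :
    T.Comp p x = T.tr p {x} := by
  apply Subset.antisymm
  · exact sUnion_subset fun B ⟨hxB, hB⟩ => hB.subset_tr hsym ⟨x, hxB, mem_singleton x⟩
  · exact subset_sUnion_of_mem ⟨TypedSpace.subset_tr (mem_singleton x),
      TypedSpace.connected_singleton.tr⟩

/-- In a p-symmetrically typed space with least p-neighborhoods,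
`p⊢C(x) = p⊢tr(x)`. -/
theorem stmt_8 {X P : Type*} [TopologicalSpace X] [PartialOrder P]
    (T : TypedSpace X P) (p : P) (hsym : T.SymTyped p)
    (hleast : T.HasLeastNbhd p) (x : X) :
    T.Comp p x = T.tr p {x} :=
  stmt_8_general T p hsym x
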